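/- Suppose Θ ⊆ ℝ^m is compact and convex with nonempty interior and θ_0 ∈ Θ, and that for every follower i and target k the maps θ ↦ U_i^c(θ,t_k) and θ ↦ U_i^u(θ,t_k) are differentiable (in particular continuous) on Θ. Then the SLMF Stackelberg security game with deception 𝓗²(Θ) admits a Deception Strong Stackelberg Equilibrium: a triple (x*, y*, θ*) with θ* ∈ Θ, x* ∈ Ω_l, y* ∈ BR(x*, θ*) such that U_l(x*, y*) ≥ U_l(x, y) for every θ' ∈ Θ, every x ∈ Ω_l, and every y ∈ BR(x, θ'). -/

import Mathlib

open scoped BigOperators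

noncomputable section

/-- Simplex-type strategy set with total resource `r` over `K` targets. -/
def stratSet {K : ℕ} (r : ℝ) : Set (Fin K → ℝ) :=
  {x | ∑ k, x k = r ∧ ∀ k, 0 ≤ x k}

/-- Leader's utility. -/
def Ul {n K : ℕ} (Rl : ℝ) (Ulc Ulu : Fin K → ℝ)
    (x : Fin K → ℝ) (y : Fin n → Fin K → ℝ) : ℝ :=
  ∑ k, (∑ i, y i k) * (x k * Ulc k + (Rl - x k) * Ulu k)

/-- A follower's utility, with per-target covered/uncovered payoffs `Uc`, `Uu`
(the observation parameter is already substituted). -/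
def Uf {K : ℕ} (Rl : ℝ) (Uc Uu : Fin K → ℝ) (x yi : Fin K → ℝ) : ℝ :=
  ∑ k, yi k * (x k * Uc k + (Rl - x k) * Uu k)

/-- Best-response set of a follower with resource `Ri` against leader strategy `x`. -/
def BRi {K : ℕ} (Rl Ri : ℝ) (Uc Uu : Fin K → ℝ) (x : Fin K → ℝ) :
    Set (Fin K → ℝ) :=
  {yi | yi ∈ stratSet Ri ∧
    ∀ zi ∈ stratSet (K := K) Ri, Uf Rl Uc Uu x zi ≤ Uf Rl Uc Uu x yi}

/-- The auxiliary solution set SOL(y, θ′) (follower utilities already evaluated at θ′):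
pairs (y′, λ) with y′ ∈ Ω_f, λ > 0,
Σᵢ (y′)ᵢᵏ (Uᵢᵘ − Uᵢᶜ)/(U_lᶜ − U_lᵘ) = λ Σᵢ yᵢᵏ for all k, and (y′)ᵢᵏ = 0 whenever yᵢᵏ = 0. -/
def SOL {n K : ℕ} (R : Fin n → ℝ) (Ulc Ulu : Fin K → ℝ)
    (Uc Uu : Fin n → Fin K → ℝ) (y : Fin n → Fin K → ℝ) :
    Set ((Fin n → Fin K → ℝ) × ℝ) :=
  {p | (∀ i, p.1 i ∈ stratSet (R i)) ∧ 0 < p.2 ∧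
    (∀ k, ∑ i, p.1 i k * ((Uu i k - Uc i k) / (Ulc k - Ulu k)) = p.2 * ∑ i, y i k) ∧
    (∀ i k, y i k = 0 → p.1 i k = 0)}

/-- gᵢ(x,θ,k), with θ already substituted into `Uc`, `Uu`. -/
def gfun {K : ℕ} (Rl : ℝ) (Uc Uu : Fin K → ℝ) (x : Fin K → ℝ) (k : Fin K) : ℝ :=
  x k * Uc k + (Rl - x k) * Uu k

/-- The argmax target set Γ¹ᵢ(x,θ). -/
def Γ1 {K : ℕ} (Rl : ℝ) (Uc Uu : Fin K → ℝ) (x : Fin K → ℝ) : Set (Fin K) :=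
  {k | ∀ l, gfun Rl Uc Uu x l ≤ gfun Rl Uc Uu x k}

theorem stratSet_compact {K : ℕ} (r : ℝ) : IsCompact (stratSet (K := K) r) := by
  apply (isCompact_univ_pi (fun _ : Fin K => isCompact_Icc (a := (0:ℝ)) (b := r))).of_isClosed_subset
  · have : stratSet (K := K) r = {x | ∑ k, x k = r} ∩ ⋂ k, {x | 0 ≤ x k} := by
      ext x; simp [stratSet]
    rw [this]
    apply IsClosed.inter
    · exact isClosed_eq (by fun_prop) (by fun_prop)
    · exact isClosed_iInter fun k => isClosed_le (by fun_prop) (by fun_prop)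
  · intro x hx k _
    refine ⟨hx.2 k, ?_⟩
    rw [← hx.1]
    exact Finset.single_le_sum (fun j _ => hx.2 j) (Finset.mem_univ k)

theorem stratSet_nonempty {K : ℕ} (hK : 1 ≤ K) (r : ℝ) (hr : 0 < r) :
    (stratSet (K := K) r).Nonempty := by
  refine ⟨Pi.single ⟨0, hK⟩ r, by simp, fun k => ?_⟩
  by_cases h : k = ⟨0, hK⟩
  · subst h; simp [hr.le]
  · simp [Pi.single_eq_of_ne h]

/-- existence of a Deception Strong Stackelberg Equilibrium of 𝓗²(Θ). -/
theorem exists_DSSE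
    (n K m : ℕ) (hn : 1 ≤ n) (hK : 1 ≤ K)
    (Rl : ℝ) (hRl : 0 < Rl) (R : Fin n → ℝ) (hR : ∀ i, 0 < R i)
    (Ulc Ulu : Fin K → ℝ)
    (Uic Uiu : Fin n → EuclideanSpace ℝ (Fin m) → Fin K → ℝ)
    (θ0 : EuclideanSpace ℝ (Fin m))
    (Θ : Set (EuclideanSpace ℝ (Fin m)))
    (hΘc : IsCompact Θ) (hΘconv : Convex ℝ Θ)
    (hΘint : (interior Θ).Nonempty) (hθ0 : θ0 ∈ Θ)
    (hdc : ∀ i k, DifferentiableOn ℝ (fun θ => Uic i θ k) Θ)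
    (hdu : ∀ i k, DifferentiableOn ℝ (fun θ => Uiu i θ k) Θ) :
    ∃ θstar ∈ Θ, ∃ x ∈ stratSet (K := K) Rl, ∃ y : Fin n → Fin K → ℝ,
      (∀ i, y i ∈ BRi Rl (R i) (Uic i θstar) (Uiu i θstar) x) ∧
      (∀ θ' ∈ Θ, ∀ x' ∈ stratSet (K := K) Rl, ∀ y' : Fin n → Fin K → ℝ,
        (∀ i, y' i ∈ BRi Rl (R i) (Uic i θ') (Uiu i θ') x') →
        Ul Rl Ulc Ulu x' y' ≤ Ul Rl Ulc Ulu x y) := by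
  classical
  let P : Set (EuclideanSpace ℝ (Fin m) × (Fin K → ℝ) × (Fin n → Fin K → ℝ)) :=
    Θ ×ˢ (stratSet (K := K) Rl ×ˢ Set.univ.pi fun i => stratSet (K := K) (R i))
  have hP : IsCompact P :=
    hΘc.prod ((stratSet_compact Rl).prod (isCompact_univ_pi fun i => stratSet_compact (R i)))
  have hc1 : ∀ i k, ContinuousOn (fun p : EuclideanSpace ℝ (Fin m) × (Fin K → ℝ) ×
      (Fin n → Fin K → ℝ) => Uic i p.1 k) P := fun i k =>
    (hdc i k).continuousOn.comp continuousOn_fst fun p hp => hp.1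
  have hc2 : ∀ i k, ContinuousOn (fun p : EuclideanSpace ℝ (Fin m) × (Fin K → ℝ) ×
      (Fin n → Fin K → ℝ) => Uiu i p.1 k) P := fun i k =>
    (hdu i k).continuousOn.comp continuousOn_fst fun p hp => hp.1
  let C : Set (EuclideanSpace ℝ (Fin m) × (Fin K → ℝ) × (Fin n → Fin K → ℝ)) :=
    P ∩ ⋂ (i : Fin n) (z : Fin K → ℝ) (_ : z ∈ stratSet (K := K) (R i)),
      {p ∈ P | Uf Rl (Uic i p.1) (Uiu i p.1) p.2.1 z ≤
        Uf Rl (Uic i p.1) (Uiu i p.1) p.2.1 (p.2.2 i)}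
  have hC : IsCompact C := by
    apply hP.inter_right
    refine isClosed_iInter fun i => isClosed_iInter fun z => isClosed_iInter fun _ => ?_
    have hg : ∀ k, ContinuousOn (fun p : EuclideanSpace ℝ (Fin m) × (Fin K → ℝ) ×
        (Fin n → Fin K → ℝ) => p.2.1 k * Uic i p.1 k + (Rl - p.2.1 k) * Uiu i p.1 k) P :=
      fun k => ((show Continuous _ by fun_prop).continuousOn.mul (hc1 i k)).add
        ((show Continuous _ by fun_prop).continuousOn.mul (hc2 i k))
    apply hP.isClosed.isClosed_le
    · exact continuousOn_finsetSum _ fun k _ =>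
        (show Continuous _ by fun_prop).continuousOn.mul (hg k)
    · exact continuousOn_finsetSum _ fun k _ =>
        (show Continuous _ by fun_prop).continuousOn.mul (hg k)
  have key : ∀ θ ∈ Θ, ∀ x ∈ stratSet (K := K) Rl, ∀ y : Fin n → Fin K → ℝ,
      (∀ i, y i ∈ BRi Rl (R i) (Uic i θ) (Uiu i θ) x) → (θ, x, y) ∈ C := by
    intro θ hθ x hx y hy
    have hp : (θ, x, y) ∈ P := ⟨hθ, hx, fun i _ => (hy i).1⟩
    refine ⟨hp, ?_⟩
    simp only [Set.mem_iInter]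
    exact fun i z hz => ⟨hp, (hy i).2 z hz⟩
  have hne : C.Nonempty := by
    obtain ⟨x, hx⟩ := stratSet_nonempty hK Rl hRl
    have : ∀ i, ∃ yi, yi ∈ BRi Rl (R i) (Uic i θ0) (Uiu i θ0) x := by
      intro i
      obtain ⟨yi, h1, h2⟩ := (stratSet_compact (R i)).exists_isMaxOn
        (stratSet_nonempty hK (R i) (hR i))
        (f := fun z => Uf Rl (Uic i θ0) (Uiu i θ0) x z)
        (by unfold Uf; fun_prop)
      exact ⟨yi, h1, fun z hz => h2 hz⟩
    choose y hy using this
    exact ⟨_, key θ0 hθ0 x hx y hy⟩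
  obtain ⟨⟨θ, x, y⟩, hmem, hmax⟩ := hC.exists_isMaxOn hne
    (f := fun p => Ul Rl Ulc Ulu p.2.1 p.2.2) (by unfold Ul; fun_prop)
  obtain ⟨⟨hθ, hx, hy⟩, hb⟩ := hmem
  simp only [Set.mem_iInter] at hb
  refine ⟨θ, hθ, x, hx, y, fun i => ⟨hy i trivial, fun z hz => (hb i z hz).2⟩, ?_⟩
  intro θ' hθ' x' hx' y' hy'
  exact hmax (key θ' hθ' x' hx' y' hy')
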